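/- Let T, E₁, E₂ : ℝ × ℝ → ℝ³ and k₁, k₂ : ℝ × ℝ → ℝ be smooth with (T, E₁, E₂) pairwise ⟨·,·⟩_L-orthogonal, ⟨T,T⟩_L = −1, ⟨E₁,E₁⟩_L = ⟨E₂,E₂⟩_L = 1, satisfying Tₛ = k₁E₁ + k₂E₂, (E₁)ₛ = k₁T, (E₂)ₛ = k₂T and T_t = −(k₂)ₛE₁ + (k₁)ₛE₂, (E₁)_t = −(k₂)ₛT + ½(k₁² + k₂²)E₂, (E₂)_t = (k₁)ₛT − ½(k₁² + k₂²)E₁. Then the principal curvatures evolve according to (k₁)_t = −(k₂)ₛₛ + ½(k₁² + k₂²)k₂ and (k₂)_t = (k₁)ₛₛ − ½(k₁² + k₂²)k₁. -/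

import Mathlib

noncomputable section

open Real

/-- Minkowski 3-space: ℝ³ as a vector type. -/
abbrev V3 : Type := Fin 3 → ℝ

/-- Lorentzian inner product ⟨x,y⟩_L = −x₁y₁ + x₂y₂ + x₃y₃ on ℝ³. -/
def lor (x y : V3) : ℝ := -(x 0 * y 0) + x 1 * y 1 + x 2 * y 2

/-- Lorentzian cross product x ×_L y = (x₃y₂ − x₂y₃, x₃y₁ − x₁y₃, x₁y₂ − x₂y₁). -/
def lcross (x y : V3) : V3 :=
  ![x 2 * y 1 - x 1 * y 2, x 2 * y 0 - x 0 * y 2, x 0 * y 1 - x 1 * y 0]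

/-- Partial derivative with respect to the first variable `s`. -/
def pds {E : Type*} [NormedAddCommGroup E] [NormedSpace ℝ E]
    (f : ℝ × ℝ → E) (p : ℝ × ℝ) : E := deriv (fun s => f (s, p.2)) p.1

/-- Partial derivative with respect to the second variable `t`. -/
def pdt {E : Type*} [NormedAddCommGroup E] [NormedSpace ℝ E]
    (f : ℝ × ℝ → E) (p : ℝ × ℝ) : E := deriv (fun t => f (p.1, t)) p.2

section helpers
variable {E : Type*} [NormedAddCommGroup E] [NormedSpace ℝ E]

lemma hasDerivAt_s {f : ℝ × ℝ → E} (hf : Differentiable ℝ f) (p : ℝ × ℝ) :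
    HasDerivAt (fun s => f (s, p.2)) (fderiv ℝ f p (1, 0)) p.1 := by
  have h1 : HasDerivAt (fun s : ℝ => (s, p.2)) ((1 : ℝ), (0 : ℝ)) p.1 :=
    (hasDerivAt_id p.1).prodMk (hasDerivAt_const p.1 p.2)
  exact HasFDerivAt.comp_hasDerivAt (f := fun s : ℝ => (s, p.2)) p.1 (hf p).hasFDerivAt h1

lemma hasDerivAt_t {f : ℝ × ℝ → E} (hf : Differentiable ℝ f) (p : ℝ × ℝ) :
    HasDerivAt (fun t => f (p.1, t)) (fderiv ℝ f p (0, 1)) p.2 := by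
  have h1 : HasDerivAt (fun t : ℝ => (p.1, t)) ((0 : ℝ), (1 : ℝ)) p.2 :=
    (hasDerivAt_const p.2 p.1).prodMk (hasDerivAt_id p.2)
  exact HasFDerivAt.comp_hasDerivAt (f := fun t : ℝ => (p.1, t)) p.2 (hf p).hasFDerivAt h1

lemma pds_eq {f : ℝ × ℝ → E} (hf : Differentiable ℝ f) :
    pds f = fun p => fderiv ℝ f p (1, 0) := funext fun p => (hasDerivAt_s hf p).deriv

lemma pdt_eq {f : ℝ × ℝ → E} (hf : Differentiable ℝ f) :
    pdt f = fun p => fderiv ℝ f p (0, 1) := funext fun p => (hasDerivAt_t hf p).deriv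

lemma hasDerivAt_pds {f : ℝ × ℝ → E} (hf : Differentiable ℝ f) (p : ℝ × ℝ) :
    HasDerivAt (fun s => f (s, p.2)) (pds f p) p.1 := by
  rw [pds_eq hf]; exact hasDerivAt_s hf p

lemma hasDerivAt_pdt {f : ℝ × ℝ → E} (hf : Differentiable ℝ f) (p : ℝ × ℝ) :
    HasDerivAt (fun t => f (p.1, t)) (pdt f p) p.2 := by
  rw [pdt_eq hf]; exact hasDerivAt_t hf p

lemma diff_of_smooth {f : ℝ × ℝ → E} (hf : ContDiff ℝ (⊤ : ℕ∞) f) : Differentiable ℝ f :=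
  hf.differentiable (by simp)

lemma diff_fderiv {f : ℝ × ℝ → E} (hf : ContDiff ℝ (⊤ : ℕ∞) f) :
    Differentiable ℝ (fderiv ℝ f) :=
  (hf.fderiv_right (m := 1) (by norm_cast)).differentiable (by simp)

lemma diff_pds {f : ℝ × ℝ → E} (hf : ContDiff ℝ (⊤ : ℕ∞) f) : Differentiable ℝ (pds f) := by
  rw [pds_eq (diff_of_smooth hf)]
  exact (diff_fderiv hf).clm_apply (differentiable_const _)

lemma diff_pdt {f : ℝ × ℝ → E} (hf : ContDiff ℝ (⊤ : ℕ∞) f) : Differentiable ℝ (pdt f) := by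
  rw [pdt_eq (diff_of_smooth hf)]
  exact (diff_fderiv hf).clm_apply (differentiable_const _)

lemma pds_pdt_comm {f : ℝ × ℝ → E} (hf : ContDiff ℝ (⊤ : ℕ∞) f) (p : ℝ × ℝ) :
    pdt (pds f) p = pds (pdt f) p := by
  have hd := diff_fderiv hf
  rw [pds_eq (diff_pdt hf), pdt_eq (diff_pds hf), pds_eq (diff_of_smooth hf),
    pdt_eq (diff_of_smooth hf)]
  have key : ∀ v w : ℝ × ℝ, fderiv ℝ (fun q => fderiv ℝ f q v) p w
      = fderiv ℝ (fderiv ℝ f) p w v := by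
    intro v w
    rw [fderiv_clm_apply (hd p) (differentiableAt_const v)]
    simp
  simp only [key]
  have hs : IsSymmSndFDerivAt ℝ f p :=
    hf.contDiffAt.isSymmSndFDerivAt (by simp [minSmoothness_of_isRCLikeNormedField]; norm_cast)
  exact hs _ _

end helpers

lemma lor_ne_zero {x : V3} (h : lor x x = -1) : x ≠ 0 := by
  rintro rfl; simp [lor] at h

/-- For a parallel frame `(T,E₁,E₂)` of signature `(−,+,+)` with the
stated `s`- and `t`-evolution equations (with `u = ½(k₁² + k₂²)`), the principal
curvatures evolve by `(k₁)_t = −(k₂)ₛₛ + ½(k₁² + k₂²)k₂` and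
`(k₂)_t = (k₁)ₛₛ − ½(k₁² + k₂²)k₁`. -/
theorem statement7 (T E₁ E₂ : ℝ × ℝ → V3) (k₁ k₂ : ℝ × ℝ → ℝ)
    (hT : ContDiff ℝ (⊤ : ℕ∞) T) (hE₁ : ContDiff ℝ (⊤ : ℕ∞) E₁) (hE₂ : ContDiff ℝ (⊤ : ℕ∞) E₂)
    (hk₁ : ContDiff ℝ (⊤ : ℕ∞) k₁) (hk₂ : ContDiff ℝ (⊤ : ℕ∞) k₂)
    (hTT : ∀ p, lor (T p) (T p) = -1)
    (hE₁E₁ : ∀ p, lor (E₁ p) (E₁ p) = 1)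
    (hE₂E₂ : ∀ p, lor (E₂ p) (E₂ p) = 1)
    (hTE₁ : ∀ p, lor (T p) (E₁ p) = 0)
    (hTE₂ : ∀ p, lor (T p) (E₂ p) = 0)
    (hE₁E₂ : ∀ p, lor (E₁ p) (E₂ p) = 0)
    (hTs : ∀ p, pds T p = k₁ p • E₁ p + k₂ p • E₂ p)
    (hE₁s : ∀ p, pds E₁ p = k₁ p • T p)
    (hE₂s : ∀ p, pds E₂ p = k₂ p • T p)
    (hTt : ∀ p, pdt T p = -(pds k₂ p) • E₁ p + (pds k₁ p) • E₂ p)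
    (hE₁t : ∀ p, pdt E₁ p = -(pds k₂ p) • T p + ((k₁ p ^ 2 + k₂ p ^ 2) / 2) • E₂ p)
    (hE₂t : ∀ p, pdt E₂ p = (pds k₁ p) • T p - ((k₁ p ^ 2 + k₂ p ^ 2) / 2) • E₁ p) :
    (∀ p, pdt k₁ p = -(pds (pds k₂) p) + (k₁ p ^ 2 + k₂ p ^ 2) / 2 * k₂ p) ∧
    (∀ p, pdt k₂ p = pds (pds k₁) p - (k₁ p ^ 2 + k₂ p ^ 2) / 2 * k₁ p) := by
  have dT := diff_of_smooth hT
  have dE₁ := diff_of_smooth hE₁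
  have dE₂ := diff_of_smooth hE₂
  have dk₁ := diff_of_smooth hk₁
  have dk₂ := diff_of_smooth hk₂
  have du : ∀ p : ℝ × ℝ, HasDerivAt (fun s => (k₁ (s, p.2) ^ 2 + k₂ (s, p.2) ^ 2) / 2)
      (k₁ p * pds k₁ p + k₂ p * pds k₂ p) p.1 := by
    intro p
    have := (((hasDerivAt_pds dk₁ p).pow 2).add ((hasDerivAt_pds dk₂ p).pow 2)).div_const 2
    refine this.congr_deriv ?_
    simp
    ring
  constructor
  · intro p
    have hc := pds_pdt_comm hE₁ p
    have h1 : pdt (pds E₁) p = k₁ p • pdt T p + pdt k₁ p • T p := by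
      rw [funext hE₁s]
      exact ((hasDerivAt_pdt dk₁ p).smul (hasDerivAt_pdt dT p)).deriv
    have h2 : pds (pdt E₁) p = (-(pds k₂ p) • pds T p + -(pds (pds k₂) p) • T p) +
        (((k₁ p ^ 2 + k₂ p ^ 2) / 2) • pds E₂ p
          + (k₁ p * pds k₁ p + k₂ p * pds k₂ p) • E₂ p) := by
      rw [funext hE₁t]
      exact (((hasDerivAt_pds (diff_pds hk₂) p).neg.smul (hasDerivAt_pds dT p)).add
        ((du p).smul (hasDerivAt_pds dE₂ p))).deriv
    rw [h1, h2, hTt, hTs, hE₂s] at hc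
    have h0 : (pdt k₁ p - (-(pds (pds k₂) p) + (k₁ p ^ 2 + k₂ p ^ 2) / 2 * k₂ p)) • T p = 0 := by
      rw [← sub_eq_zero] at hc
      rw [← hc]
      module
    exact sub_eq_zero.1 ((smul_eq_zero.1 h0).resolve_right (lor_ne_zero (hTT p)))
  · intro p
    have hc := pds_pdt_comm hE₂ p
    have h1 : pdt (pds E₂) p = k₂ p • pdt T p + pdt k₂ p • T p := by
      rw [funext hE₂s]
      exact ((hasDerivAt_pdt dk₂ p).smul (hasDerivAt_pdt dT p)).deriv
    have h2 : pds (pdt E₂) p = (pds k₁ p • pds T p + pds (pds k₁) p • T p) -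
        (((k₁ p ^ 2 + k₂ p ^ 2) / 2) • pds E₁ p
          + (k₁ p * pds k₁ p + k₂ p * pds k₂ p) • E₁ p) := by
      rw [funext hE₂t]
      exact (((hasDerivAt_pds (diff_pds hk₁) p).smul (hasDerivAt_pds dT p)).sub
        ((du p).smul (hasDerivAt_pds dE₁ p))).deriv
    rw [h1, h2, hTt, hTs, hE₁s] at hc
    have h0 : (pdt k₂ p - (pds (pds k₁) p - (k₁ p ^ 2 + k₂ p ^ 2) / 2 * k₁ p)) • T p = 0 := by
      rw [← sub_eq_zero] at hc
      rw [← hc]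
      module
    exact sub_eq_zero.1 ((smul_eq_zero.1 h0).resolve_right (lor_ne_zero (hTT p)))
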